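/- Let α, β ∈ ℂ and q ∈ ℂ with q ≠ 0. The gate R_{α,β,q} is entangling—that is, there exist u, v ∈ ℂ² such that R_{α,β,q}·(u ⊗ v) is not a product state—if and only if α ≠ 0 and β ≠ 0. -/

import Mathlib

/-!
A vector is a product state exactly when its amplitudes, arranged as a `2 × 2` matrix, have
vanishing determinant. This determinant, evaluated on the image of `u ⊗ v` under the gate,
factorizes as `α β q⁻¹ (u₀² + q u₁²) (v₀² + q v₁²)`. It vanishes identically when `α β = 0`, and
otherwise `e₀ ⊗ e₀` makes it nonzero.
-/

open Matrix Complex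

/-- The general family R_{α,β,q}. -/
noncomputable def Rg (α β q : ℂ) : Matrix (Fin 4) (Fin 4) ℂ :=
  !![α, 0, 0, β * q; 0, -β, α, 0; 0, α, -β, 0; β * q⁻¹, 0, 0, α]

/-- The Kronecker product u ⊗ v of two vectors in ℂ². -/
def kron2 (u v : Fin 2 → ℂ) : Fin 4 → ℂ :=
  ![u 0 * v 0, u 0 * v 1, u 1 * v 0, u 1 * v 1]

theorem exists_eq_vecMulVec_iff_det_eq_zero {K : Type*} [Field K] (M : Matrix (Fin 2) (Fin 2) K) :
    (∃ u v, M = vecMulVec u v) ↔ M.det = 0 := by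
  constructor
  · rintro ⟨u, v, rfl⟩
    exact det_vecMulVec u v
  · intro hdet
    have hdep : ¬ LinearIndependent K M.row := by
      rw [linearIndependent_rows_iff_isUnit, isUnit_iff_isUnit_det, hdet]
      exact not_isUnit_zero
    by_cases hrow : M 1 = 0
    · refine ⟨![1, 0], M 0, ?_⟩
      ext i j
      fin_cases i <;> simp [vecMulVec_apply, hrow]
    · obtain ⟨a, ha⟩ : ∃ a : K, a • M 1 = M 0 := by
        by_contra! hne
        exact hdep (linearIndependent_fin2.mpr ⟨hrow, hne⟩)
      refine ⟨![a, 1], M 1, ?_⟩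
      ext i j
      fin_cases i <;> simp [vecMulVec_apply, ← ha]

/-- The amplitudes `w₀₀, w₀₁, w₁₀, w₁₁` of a two-qubit vector as a `2 × 2` matrix, the tensor
factors indexing rows and columns. It turns product states into matrices of rank at most one. -/
def amplitudeMatrix {R : Type*} (w : Fin 4 → R) : Matrix (Fin 2) (Fin 2) R :=
  !![w 0, w 1; w 2, w 3]

theorem det_amplitudeMatrix {R : Type*} [CommRing R] (w : Fin 4 → R) :
    (amplitudeMatrix w).det = w 0 * w 3 - w 1 * w 2 :=
  det_fin_two_of _ _ _ _

theorem eq_kron2_iff_amplitudeMatrix_eq_vecMulVec (w : Fin 4 → ℂ) (u v : Fin 2 → ℂ) :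
    w = kron2 u v ↔ amplitudeMatrix w = vecMulVec u v := by
  simp [funext_iff, ← Matrix.ext_iff, Fin.forall_fin_succ, kron2, amplitudeMatrix,
    vecMulVec_apply, and_assoc]

theorem exists_eq_kron2_iff_det_amplitudeMatrix_eq_zero (w : Fin 4 → ℂ) :
    (∃ u v, w = kron2 u v) ↔ (amplitudeMatrix w).det = 0 := by
  simp_rw [eq_kron2_iff_amplitudeMatrix_eq_vecMulVec, exists_eq_vecMulVec_iff_det_eq_zero]

theorem Rg_mulVec (α β q : ℂ) (w : Fin 4 → ℂ) :
    Rg α β q *ᵥ w =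
      ![α * w 0 + β * q * w 3, -β * w 1 + α * w 2, α * w 1 - β * w 2, β * q⁻¹ * w 0 + α * w 3] := by
  ext i
  fin_cases i <;> simp [Rg, mulVec, dotProduct, Fin.sum_univ_four, sub_eq_add_neg]

theorem det_amplitudeMatrix_Rg_mulVec {q : ℂ} (hq : q ≠ 0) (α β : ℂ) (w : Fin 4 → ℂ) :
    (amplitudeMatrix (Rg α β q *ᵥ w)).det =
      (α ^ 2 + β ^ 2) * (amplitudeMatrix w).det +
        α * β * (q⁻¹ * w 0 ^ 2 + w 1 ^ 2 + w 2 ^ 2 + q * w 3 ^ 2) := by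
  simp only [det_amplitudeMatrix, Rg_mulVec, cons_val]
  field_simp
  ring

theorem det_amplitudeMatrix_Rg_mulVec_kron2 {q : ℂ} (hq : q ≠ 0) (α β : ℂ) (u v : Fin 2 → ℂ) :
    (amplitudeMatrix (Rg α β q *ᵥ kron2 u v)).det =
      α * β * q⁻¹ * (u 0 ^ 2 + q * u 1 ^ 2) * (v 0 ^ 2 + q * v 1 ^ 2) := by
  have hprod : (amplitudeMatrix (kron2 u v)).det = 0 :=
    (exists_eq_kron2_iff_det_amplitudeMatrix_eq_zero _).mp ⟨u, v, rfl⟩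
  rw [det_amplitudeMatrix_Rg_mulVec hq, hprod]
  simp only [kron2, cons_val]
  field_simp
  ring

/-- R_{α,β,q} is entangling iff α ≠ 0 and β ≠ 0. -/
theorem Rg_entangling_iff (α β q : ℂ) (hq : q ≠ 0) :
    (∃ u v : Fin 2 → ℂ, ¬ ∃ u' v' : Fin 2 → ℂ,
        (Rg α β q).mulVec (kron2 u v) = kron2 u' v')
      ↔ (α ≠ 0 ∧ β ≠ 0) := by
  simp_rw [exists_eq_kron2_iff_det_amplitudeMatrix_eq_zero, det_amplitudeMatrix_Rg_mulVec_kron2 hq]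
  constructor
  · rintro ⟨u, v, hdet⟩
    constructor <;> rintro rfl <;> simp at hdet
  · rintro ⟨hα, hβ⟩
    refine ⟨![1, 0], ![1, 0], ?_⟩
    simp [hα, hβ, hq]
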